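/- arXiv:2103.06358 — 2 statements merged into one kernel-verified Lean document; each statement's English description precedes it below -/
import Mathlib

section
/- For every p ∈ (2,∞), every real-valued martingale (X_n)_{n≥1} (with X_0 = 0), and every n ≥ 1, one has E[S_n(X)^p] ≤ (2p)^{p/2}·E[(X_n*)^p]. -/
/-!
The proof is a pathwise inequality whose error term is a martingale transform. Put `q = p / 2`,
`A k = ∑ j < k, (X (j+1) - X j) ^ 2`, `r = q - 1` and `M = X_n*`. Convexity of `t ↦ t ^ q` gives
`A n ^ q ≤ q * ∑ k < n, A (k+1) ^ r * (X (k+1) - X k) ^ 2`. Summation by parts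
(`sum_mul_sq_eq`) turns the sum on the right into
`∑ j < n, (A (j+1) ^ r - A j ^ r) * (X n - X j) ^ 2 - 2 * ∑ k < n, H k * (X (k+1) - X k)`, where
`H k` (`transformCoeff`) depends only on `X 0, …, X k`. Since `A` is nondecreasing and
`|X n - X j| ≤ 2 * M`, the first sum is at most `4 * A n ^ r * M ^ 2`, and Young's inequality
absorbs `A n ^ r` into the left-hand side, leaving (`pathwise_bound`)
`A n ^ q ≤ (2 * p) ^ q * M ^ p - 2 * q ^ 2 * ∑ k < n, H k * (X (k+1) - X k)`.

If `E[M ^ p] = ∞` there is nothing to prove. Otherwise each `H k * (X (k+1) - X k)` is dominated by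
a multiple of `M ^ p` (`abs_transform_le`), hence is integrable, and has mean zero because
`H k` is `ℱ k`-measurable. Taking expectations finishes the proof.
-/

open MeasureTheory Finset

/-- The squared square function `∑ j < k, (x (j+1) - x j) ^ 2` of a real sequence. -/
noncomputable def sqSum (x : ℕ → ℝ) (k : ℕ) : ℝ :=
  ∑ j ∈ range k, (x (j + 1) - x j) ^ 2

/-- The predictable integrand `H k` of the martingale transform in the pathwise inequality;
it depends only on `x 0, …, x k`. -/
noncomputable def transformCoeff (r : ℝ) (x : ℕ → ℝ) (k : ℕ) : ℝ :=
  ∑ j ∈ range k, (sqSum x (j + 1) ^ r - sqSum x j ^ r) * (x k - x j)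

lemma sqSum_nonneg (x : ℕ → ℝ) (k : ℕ) : 0 ≤ sqSum x k :=
  Finset.sum_nonneg fun _ _ => sq_nonneg _

lemma sqSum_succ (x : ℕ → ℝ) (k : ℕ) :
    sqSum x (k + 1) = sqSum x k + (x (k + 1) - x k) ^ 2 :=
  Finset.sum_range_succ _ _

lemma sqSum_rpow_mono {r : ℝ} (hr : 0 < r) (x : ℕ → ℝ) (k : ℕ) :
    sqSum x k ^ r ≤ sqSum x (k + 1) ^ r :=
  Real.rpow_le_rpow (sqSum_nonneg x k)
    (by rw [sqSum_succ]; linarith [sq_nonneg (x (k + 1) - x k)]) hr.le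

/-- The increments of `A ^ r` telescope to `A k ^ r`, because `0 ^ r = 0` for `r > 0`. -/
lemma sum_sqSum_rpow {r : ℝ} (hr : 0 < r) (x : ℕ → ℝ) (k : ℕ) :
    ∑ j ∈ range k, (sqSum x (j + 1) ^ r - sqSum x j ^ r) = sqSum x k ^ r := by
  rw [Finset.sum_range_sub (fun j => sqSum x j ^ r)]
  simp [sqSum, Real.zero_rpow hr.ne']

/-- Young's inequality with exponents `q / (q - 1)` and `q`, which is also the tangent-line bound
for `t ↦ t ^ q` at `u`. -/
lemma young_rpow {q u v : ℝ} (hq : 1 < q) (hu : 0 ≤ u) (hv : 0 ≤ v) :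
    q * (u ^ (q - 1) * v) ≤ (q - 1) * u ^ q + v ^ q := by
  have hq0 : q ≠ 0 := by linarith
  have hq1 : q - 1 ≠ 0 := by linarith
  have hc : (q / (q - 1)).HolderConjugate q :=
    (Real.HolderConjugate.conjExponent hq).symm
  have h := Real.young_inequality_of_nonneg (Real.rpow_nonneg hu (q - 1)) hv hc
  rw [← Real.rpow_mul hu, mul_div_cancel₀ q hq1] at h
  have h2 := mul_le_mul_of_nonneg_left h (by linarith : (0 : ℝ) ≤ q)
  have e : q * (u ^ q / (q / (q - 1)) + v ^ q / q) = (q - 1) * u ^ q + v ^ q := by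
    field_simp
  linarith

/-- Summation by parts, for an arbitrary weight `b` with `b 0 = 0`. -/
lemma sum_mul_sq_eq (b x : ℕ → ℝ) (hb : b 0 = 0) (n : ℕ) :
    ∑ k ∈ range n, b (k + 1) * (x (k + 1) - x k) ^ 2 =
      ∑ j ∈ range n, (b (j + 1) - b j) * (x n - x j) ^ 2 -
        2 * ∑ k ∈ range n,
          (∑ j ∈ range k, (b (j + 1) - b j) * (x k - x j)) * (x (k + 1) - x k) := by
  induction n with
  | zero => simp
  | succ n ih =>
    rw [Finset.sum_range_succ, ih, Finset.sum_range_succ, Finset.sum_range_succ]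
    have hs : ∑ j ∈ range n, (b (j + 1) - b j) = b n := by
      rw [Finset.sum_range_sub, hb, sub_zero]
    have e : ∑ j ∈ range n, (b (j + 1) - b j) * (x (n + 1) - x j) ^ 2 =
        ∑ j ∈ range n, (b (j + 1) - b j) * (x n - x j) ^ 2 +
        2 * ((∑ j ∈ range n, (b (j + 1) - b j) * (x n - x j)) * (x (n + 1) - x n)) +
        (∑ j ∈ range n, (b (j + 1) - b j)) * (x (n + 1) - x n) ^ 2 := by
      rw [Finset.sum_mul, Finset.sum_mul, Finset.mul_sum, ← Finset.sum_add_distrib,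
        ← Finset.sum_add_distrib]
      exact Finset.sum_congr rfl fun j _ => by ring
    rw [e, hs]
    ring

/-- Convexity of `t ↦ t ^ q`, summed along the path. -/
lemma sqSum_rpow_le {q : ℝ} (hq : 1 < q) (x : ℕ → ℝ) (n : ℕ) :
    sqSum x n ^ q ≤
      q * ∑ k ∈ range n, sqSum x (k + 1) ^ (q - 1) * (x (k + 1) - x k) ^ 2 := by
  rw [← sum_sqSum_rpow (by linarith) x n, Finset.mul_sum]
  refine Finset.sum_le_sum fun k _ => ?_
  have hy := young_rpow hq (sqSum_nonneg x (k + 1)) (sqSum_nonneg x k)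
  have hd : (x (k + 1) - x k) ^ 2 = sqSum x (k + 1) - sqSum x k := by
    rw [sqSum_succ]; ring
  have hm : sqSum x (k + 1) ^ (q - 1) * sqSum x (k + 1) = sqSum x (k + 1) ^ q := by
    rw [← Real.rpow_add_one' (sqSum_nonneg x _) (by linarith), sub_add_cancel]
  rw [hd, mul_sub, hm]
  linarith

lemma sub_sq_le {s t M : ℝ} (hs : |s| ≤ M) (ht : |t| ≤ M) : (s - t) ^ 2 ≤ 4 * M ^ 2 := by
  have h : |s - t| ≤ 2 * M := by linarith [abs_sub s t]
  have h2 := pow_le_pow_left₀ (abs_nonneg _) h 2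
  rw [sq_abs] at h2
  linarith

/-- The deterministic core of the argument: for `q = p / 2` the constant `4 * q` is `2 * p`, and the
last sum is a martingale transform. -/
lemma pathwise_bound {q : ℝ} (hq : 1 < q) (x : ℕ → ℝ) (n : ℕ) {M : ℝ}
    (hM : ∀ j ≤ n, |x j| ≤ M) :
    sqSum x n ^ q ≤ (4 * q * M ^ 2) ^ q -
      2 * q ^ 2 * ∑ k ∈ range n, transformCoeff (q - 1) x k * (x (k + 1) - x k) := by
  have hr : 0 < q - 1 := by linarith
  have h1 := sqSum_rpow_le hq x n
  have h2 := sum_mul_sq_eq (fun j => sqSum x j ^ (q - 1)) x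
    (by simp [sqSum, Real.zero_rpow hr.ne']) n
  have h3 : ∑ j ∈ range n,
      (sqSum x (j + 1) ^ (q - 1) - sqSum x j ^ (q - 1)) * (x n - x j) ^ 2 ≤
      sqSum x n ^ (q - 1) * (4 * M ^ 2) := by
    rw [← sum_sqSum_rpow hr x n, Finset.sum_mul]
    refine Finset.sum_le_sum fun j hj => ?_
    exact mul_le_mul_of_nonneg_left
      (sub_sq_le (hM n le_rfl) (hM j (Finset.mem_range.1 hj).le))
      (sub_nonneg.2 (sqSum_rpow_mono hr x j))
  -- The choice `v = 4 * q * M ^ 2` absorbs `A n ^ (q - 1)` without dividing by `A n ^ q`.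
  have h4 := young_rpow hq (sqSum_nonneg x n)
    (by positivity : 0 ≤ 4 * q * M ^ 2)
  rw [h2] at h1
  set Z := ∑ k ∈ range n, transformCoeff (q - 1) x k * (x (k + 1) - x k) with hZ
  have h5 : sqSum x n ^ q ≤ q * (sqSum x n ^ (q - 1) * (4 * M ^ 2) - 2 * Z) :=
    h1.trans (mul_le_mul_of_nonneg_left (sub_le_sub_right h3 _) (by linarith))
  have h6 := mul_le_mul_of_nonneg_left h5 (by linarith : 0 ≤ q)
  linarith

/-- The domination that makes the terms of the martingale transform integrable once
`M ^ p = (M ^ 2) ^ q` is. -/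
lemma abs_transform_le {q : ℝ} (hq : 1 < q) (x : ℕ → ℝ) (k : ℕ) {M : ℝ}
    (hM : ∀ j ≤ k + 1, |x j| ≤ M) :
    |transformCoeff (q - 1) x k * (x (k + 1) - x k)| ≤
      (4 * k) ^ (q - 1) * 4 * (M ^ 2) ^ q := by
  have hr : 0 < q - 1 := by linarith
  have hM0 : 0 ≤ M := (abs_nonneg _).trans (hM 0 (Nat.zero_le _))
  have hd : ∀ i ≤ k + 1, ∀ j ≤ k + 1, |x i - x j| ≤ 2 * M := fun i hi j hj => by
    linarith [abs_sub (x i) (x j), hM i hi, hM j hj]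
  have h1 : |transformCoeff (q - 1) x k| ≤ sqSum x k ^ (q - 1) * (2 * M) := by
    rw [← sum_sqSum_rpow hr x k, Finset.sum_mul]
    refine (Finset.abs_sum_le_sum_abs _ _).trans (Finset.sum_le_sum fun j hj => ?_)
    have hj := Finset.mem_range.1 hj
    have h0 := sub_nonneg.2 (sqSum_rpow_mono hr x j)
    rw [abs_mul, abs_of_nonneg h0]
    exact mul_le_mul_of_nonneg_left (hd k (by omega) j (by omega)) h0
  have h2 : sqSum x k ≤ 4 * k * M ^ 2 := by
    have : sqSum x k ≤ ∑ _j ∈ range k, 4 * M ^ 2 := Finset.sum_le_sum fun j hj => by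
      have hj := Finset.mem_range.1 hj
      exact sub_sq_le (hM _ (by omega)) (hM _ (by omega))
    rw [Finset.sum_const, Finset.card_range, nsmul_eq_mul] at this
    linarith
  have h3 : sqSum x k ^ (q - 1) ≤ (4 * k) ^ (q - 1) * (M ^ 2) ^ (q - 1) := by
    rw [← Real.mul_rpow (by positivity) (by positivity)]
    exact Real.rpow_le_rpow (sqSum_nonneg x k) h2 hr.le
  have h4 : (M ^ 2) ^ q = (M ^ 2) ^ (q - 1) * M ^ 2 := by
    rw [← Real.rpow_add_one' (by positivity) (by linarith), sub_add_cancel]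
  rw [abs_mul]
  calc _ ≤ (sqSum x k ^ (q - 1) * (2 * M)) * (2 * M) :=
        mul_le_mul h1 (hd _ le_rfl _ (by omega)) (abs_nonneg _)
          ((abs_nonneg _).trans h1)
    _ = sqSum x k ^ (q - 1) * (4 * M ^ 2) := by ring
    _ ≤ ((4 * k) ^ (q - 1) * (M ^ 2) ^ (q - 1)) * (4 * M ^ 2) :=
        mul_le_mul_of_nonneg_right h3 (by positivity)
    _ = _ := by rw [h4]; ring

lemma measurable_sqSum {Ω : Type*} {m : MeasurableSpace Ω} (X : ℕ → Ω → ℝ) (k : ℕ)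
    (hX : ∀ j ≤ k, Measurable[m] (X j)) : Measurable[m] fun ω => sqSum (fun j => X j ω) k := by
  unfold sqSum
  refine Finset.measurable_fun_sum _ fun j hj => ?_
  have hj := Finset.mem_range.1 hj
  exact ((hX _ (by omega)).sub (hX _ (by omega))).pow_const 2

lemma measurable_transformCoeff {Ω : Type*} {m : MeasurableSpace Ω} (r : ℝ) (X : ℕ → Ω → ℝ)
    (k : ℕ) (hX : ∀ j ≤ k, Measurable[m] (X j)) :
    Measurable[m] fun ω => transformCoeff r (fun j => X j ω) k := by
  unfold transformCoeff
  refine Finset.measurable_fun_sum _ fun j hj => ?_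
  have hj := Finset.mem_range.1 hj
  exact (((measurable_sqSum X _ fun i hi => hX i (by omega)).pow_const r).sub
    ((measurable_sqSum X _ fun i hi => hX i (by omega)).pow_const r)).mul
    ((hX k le_rfl).sub (hX j hj.le))

/-- A martingale increment is orthogonal to the past. -/
lemma integral_mul_increment_eq_zero {Ω : Type*} {m0 : MeasurableSpace Ω} {μ : Measure Ω}
    [IsProbabilityMeasure μ] {ℱ : Filtration ℕ m0} {X : ℕ → Ω → ℝ} (hX : Martingale X ℱ μ)
    (k : ℕ) {H : Ω → ℝ} (hH : Measurable[ℱ k] H)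
    (hint : Integrable (fun ω => H ω * (X (k + 1) ω - X k ω)) μ) :
    ∫ ω, H ω * (X (k + 1) ω - X k ω) ∂μ = 0 := by
  have hd : μ[X (k + 1) - X k | ℱ k] =ᵐ[μ] 0 := by
    filter_upwards [condExp_sub (hX.integrable (k + 1)) (hX.integrable k) (ℱ k),
      hX.condExp_ae_eq (Nat.le_succ k), hX.condExp_ae_eq (le_refl k)] with ω h1 h2 h3
    rw [h1, Pi.sub_apply, h2, h3, sub_self, Pi.zero_apply]
  have hpull := condExp_mul_of_stronglyMeasurable_left (μ := μ) (m := ℱ k)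
    (f := H) (g := X (k + 1) - X k) hH.stronglyMeasurable hint
    ((hX.integrable (k + 1)).sub (hX.integrable k))
  have h0 : μ[H * (X (k + 1) - X k) | ℱ k] =ᵐ[μ] 0 := by
    filter_upwards [hpull, hd] with ω h1 h2
    rw [h1, Pi.mul_apply, h2, Pi.zero_apply, mul_zero]
  calc ∫ ω, H ω * (X (k + 1) ω - X k ω) ∂μ
      = ∫ ω, (μ[H * (X (k + 1) - X k) | ℱ k]) ω ∂μ := (integral_condExp (ℱ.le k)).symm
    _ = 0 := by rw [integral_congr_ae h0]; simp

/-- The iterated real supremum is an honest maximum: the family is bounded, and the inner supremum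
over an empty index (`i ∉ Icc 1 n`) takes the value `0`, which is harmless for nonnegative terms. -/
lemma le_biSup_Icc (f : ℕ → ℝ) (n j : ℕ) (hj : j ∈ Finset.Icc 1 n) :
    |f j| ≤ ⨆ i ∈ Finset.Icc 1 n, |f i| := by
  refine le_ciSup_of_le ?_ j ?_
  · refine ⟨∑ i ∈ Finset.Icc 1 n, |f i|, ?_⟩
    rintro _ ⟨i, rfl⟩
    refine Real.iSup_le (fun hi => ?_) (Finset.sum_nonneg fun _ _ => abs_nonneg _)
    exact Finset.single_le_sum (f := fun i => |f i|) (fun _ _ => abs_nonneg _) hi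
  · exact (ciSup_pos (f := fun _ => |f j|) hj).ge

/-- For every `p ∈ (2,∞)`, every real-valued martingale `(X_n)` with `X_0 = 0`,
and every `n ≥ 1`, one has `E[S_n(X)^p] ≤ (2p)^{p/2} · E[(X_n*)^p]`. -/
theorem square_function_upper_bound (p : ℝ) (hp : 2 < p)
    {Ω : Type*} {m0 : MeasurableSpace Ω} {μ : Measure Ω} [IsProbabilityMeasure μ]
    (ℱ : Filtration ℕ m0) (X : ℕ → Ω → ℝ) (hX : Martingale X ℱ μ) (hX0 : X 0 = 0)
    (n : ℕ) (hn : 1 ≤ n) :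
    ∫⁻ ω, ENNReal.ofReal ((∑ j ∈ Finset.Icc 1 n, (X j ω - X (j - 1) ω) ^ 2) ^ (p / 2)) ∂μ ≤
      ENNReal.ofReal ((2 * p) ^ (p / 2)) *
        ∫⁻ ω, ENNReal.ofReal ((⨆ j ∈ Finset.Icc 1 n, |X j ω|) ^ p) ∂μ := by
  set M : Ω → ℝ := fun ω => ⨆ j ∈ Finset.Icc 1 n, |X j ω| with hMdef
  change _ ≤ _ * ∫⁻ ω, ENNReal.ofReal (M ω ^ p) ∂μ
  have hq : 1 < p / 2 := by linarith
  have hXad : ∀ k j, j ≤ k → Measurable[ℱ k] (X j) := fun k j hjk =>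
    ((hX.stronglyAdapted j).measurable).mono (ℱ.mono hjk) le_rfl
  have hXm : ∀ j, Measurable (X j) := fun j => (hXad j j le_rfl).mono (ℱ.le j) le_rfl
  have hM0 : ∀ ω, 0 ≤ M ω := fun ω =>
    (abs_nonneg _).trans (le_biSup_Icc (fun j => X j ω) n 1 (Finset.mem_Icc.2 ⟨le_rfl, hn⟩))
  have hM : ∀ ω, ∀ j ≤ n, |X j ω| ≤ M ω := by
    intro ω j hj
    rcases Nat.eq_zero_or_pos j with rfl | h
    · simpa [hX0] using hM0 ω
    · exact le_biSup_Icc (fun j => X j ω) n j (Finset.mem_Icc.2 ⟨h, hj⟩)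
  have hMm : Measurable M :=
    Measurable.biSup (f := fun j ω => |X j ω|) (↑(Finset.Icc 1 n) : Set ℕ)
      (Finset.countable_toSet _) fun j _ => (hXm j).abs
  have hS : ∀ ω, ∑ j ∈ Finset.Icc 1 n, (X j ω - X (j - 1) ω) ^ 2 =
      sqSum (fun j => X j ω) n := by
    intro ω
    have h := Finset.sum_Ico_add' (fun j => (X j ω - X (j - 1) ω) ^ 2) 0 n 1
    rw [zero_add, ← Finset.range_eq_Ico] at h
    exact h.symm
  have hMp : ∀ ω, (M ω ^ 2) ^ (p / 2) = M ω ^ p := fun ω => by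
    rw [← Real.rpow_natCast, ← Real.rpow_mul (hM0 ω)]
    congr 1
    push_cast
    ring
  have hc : 0 < (2 * p) ^ (p / 2) := Real.rpow_pos_of_pos (by linarith) _
  simp only [hS]
  by_cases htop : ∫⁻ ω, ENNReal.ofReal (M ω ^ p) ∂μ = ⊤
  · rw [htop, ENNReal.mul_top (ENNReal.ofReal_pos.2 hc).ne']
    exact le_top
  have hMint : Integrable (fun ω => M ω ^ p) μ :=
    (lintegral_ofReal_ne_top_iff_integrable (hMm.pow_const p).aestronglyMeasurable
      (Filter.Eventually.of_forall fun ω => Real.rpow_nonneg (hM0 ω) p)).1 htop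
  have hHint : ∀ k ∈ range n, Integrable (fun ω =>
      transformCoeff (p / 2 - 1) (fun j => X j ω) k * (X (k + 1) ω - X k ω)) μ := by
    intro k hk
    have hk := Finset.mem_range.1 hk
    refine (hMint.const_mul ((4 * k) ^ (p / 2 - 1) * 4)).mono'
      (((measurable_transformCoeff _ X k fun j _ => hXm j).mul
        ((hXm _).sub (hXm _))).aestronglyMeasurable)
      (Filter.Eventually.of_forall fun ω => ?_)
    rw [← hMp, Real.norm_eq_abs]
    exact abs_transform_le hq (fun j => X j ω) k fun j hj => hM ω j (by omega)
  have hZint : Integrable (fun ω => ∑ k ∈ range n,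
      transformCoeff (p / 2 - 1) (fun j => X j ω) k * (X (k + 1) ω - X k ω)) μ :=
    integrable_finsetSum _ hHint
  have hZ0 : ∫ ω, ∑ k ∈ range n,
      transformCoeff (p / 2 - 1) (fun j => X j ω) k * (X (k + 1) ω - X k ω) ∂μ = 0 := by
    rw [integral_finsetSum _ hHint]
    exact Finset.sum_eq_zero fun k hk => integral_mul_increment_eq_zero hX k
      (measurable_transformCoeff _ X k (hXad k)) (hHint k hk)
  have hpath : ∀ ω, sqSum (fun j => X j ω) n ^ (p / 2) ≤ (2 * p) ^ (p / 2) * M ω ^ p -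
      2 * (p / 2) ^ 2 * ∑ k ∈ range n,
        transformCoeff (p / 2 - 1) (fun j => X j ω) k * (X (k + 1) ω - X k ω) := by
    intro ω
    have h := pathwise_bound hq (fun j => X j ω) n (hM ω)
    rwa [show 4 * (p / 2) * M ω ^ 2 = 2 * p * M ω ^ 2 by ring,
      Real.mul_rpow (by linarith) (sq_nonneg _), hMp] at h
  have hRint := (hMint.const_mul ((2 * p) ^ (p / 2))).sub (hZint.const_mul (2 * (p / 2) ^ 2))
  calc _ ≤ ∫⁻ ω, ENNReal.ofReal ((2 * p) ^ (p / 2) * M ω ^ p -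
      2 * (p / 2) ^ 2 * ∑ k ∈ range n,
        transformCoeff (p / 2 - 1) (fun j => X j ω) k * (X (k + 1) ω - X k ω)) ∂μ :=
        lintegral_mono fun ω => ENNReal.ofReal_le_ofReal (hpath ω)
    _ = ENNReal.ofReal (∫ ω, ((2 * p) ^ (p / 2) * M ω ^ p -
      2 * (p / 2) ^ 2 * ∑ k ∈ range n,
        transformCoeff (p / 2 - 1) (fun j => X j ω) k * (X (k + 1) ω - X k ω)) ∂μ) :=
        (ofReal_integral_eq_lintegral_ofReal hRint (Filter.Eventually.of_forall fun ω =>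
          (Real.rpow_nonneg (sqSum_nonneg _ n) _).trans (hpath ω))).symm
    _ = ENNReal.ofReal ((2 * p) ^ (p / 2) * ∫ ω, M ω ^ p ∂μ) := by
        rw [integral_sub (hMint.const_mul _) (hZint.const_mul _), integral_const_mul,
          integral_const_mul, hZ0, mul_zero, sub_zero]
    _ = _ := by
        rw [ENNReal.ofReal_mul hc.le, ofReal_integral_eq_lintegral_ofReal hMint
          (Filter.Eventually.of_forall fun ω => Real.rpow_nonneg (hM0 ω) p)]
end

section
/- For every p ∈ (2,∞), every real-valued martingale (X_n)_{n≥1} (with X_0 = 0), and every n ≥ 1, one has (1/(2p))·((p−1)/p)^{(p−1)/2}·(E[(X_n*)^p])^{1/p} ≤ (E[S_n(X)^p])^{1/p}. -/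
/-! The constant comes from an inequality that holds path by path up to a martingale transform.
Write `M` for the running maximum of `|X|`, `Q = S²` for the quadratic variation and
`c = p / (p - 1)`.

* Doob's inequality has the pathwise form `M ^ p ≤ c ^ p |X n| ^ p + (transform of X)`
  (`doob_pathwise`).
* The tangent-line bound for `|x| ^ p` gives
  `|X n| ^ p ≤ p (p - 1) M ^ (p - 2) Q + (transform of X)` (`power_pathwise`).
* Young's inequality absorbs `M ^ (p - 2)` into the left-hand side, so that
  `M ^ p ≤ L ^ p S ^ p + (transform of X)` with `L = p c ^ ((p - 1) / 2)` (`pathwise`).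

If `S ∈ L^p`, then `M ≤ n S` shows that the transforms are integrable, and they have mean zero.
Taking expectations yields `‖M‖_p ≤ L ‖S‖_p`, which is the claim with room to spare: the stated
constant is `1 / (2 L)`.

Every convexity estimate on the way is the single inequality `young`. -/

open MeasureTheory Finset

/-! ### Scalar inequalities -/

/-- Young's inequality in unnormalised form; equivalently, the graph of `b ↦ b ^ r` lies above
its tangent line at `a`. -/
lemma young {r a b : ℝ} (hr : 1 < r) (ha : 0 ≤ a) (hb : 0 ≤ b) :
    r * b * a ^ (r - 1) ≤ b ^ r + (r - 1) * a ^ r := by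
  have hr0 : 0 < r := by linarith
  have hr1 : 0 < r - 1 := by linarith
  have h := Real.young_inequality_of_nonneg hb (Real.rpow_nonneg ha (r - 1))
    (Real.HolderConjugate.conjExponent hr)
  rw [← Real.rpow_mul ha, Real.conjExponent, mul_div_cancel₀ _ hr1.ne'] at h
  have h2 := mul_le_mul_of_nonneg_left h hr0.le
  calc r * b * a ^ (r - 1) = r * (b * a ^ (r - 1)) := by ring
    _ ≤ _ := h2
    _ = _ := by field_simp

/-- The sign of `x`, with value `1` at `0` so that it always has absolute value `1`. -/
noncomputable def sgn (x : ℝ) : ℝ := if 0 ≤ x then 1 else -1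

lemma sgn_cases (x : ℝ) : (sgn x = 1 ∧ |x| = x) ∨ (sgn x = -1 ∧ |x| = -x) := by
  unfold sgn
  split_ifs with h
  · exact Or.inl ⟨rfl, abs_of_nonneg h⟩
  · exact Or.inr ⟨rfl, abs_of_neg (not_le.1 h)⟩

lemma abs_sgn (x : ℝ) : |sgn x| = 1 := by
  rcases sgn_cases x with h | h <;> simp [h.1]

lemma measurable_sgn : Measurable sgn :=
  Measurable.ite measurableSet_Ici measurable_const measurable_const

lemma sgn_subgradient (x y : ℝ) : |x| + sgn x * (y - x) ≤ |y| := by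
  rcases sgn_cases x with h | h
  · rw [h.1, h.2]; linarith [le_abs_self y]
  · rw [h.1, h.2]; linarith [neg_abs_le y]

lemma rpow_split {r a : ℝ} (hr : 1 < r) (ha : 0 ≤ a) : a ^ r = a ^ (r - 1) * a := by
  rw [← Real.rpow_add_one' ha (by linarith)]; congr 1; ring

/-- Lipschitz bound for `x ↦ x ^ r` on `[0, m]`, in monotone form. -/
lemma lip_nonneg {r m a b : ℝ} (hr : 1 < r) (ha : 0 ≤ a) (hab : a ≤ b) (hbm : b ≤ m) :
    (b ^ r - a ^ r) * (b - a) ≤ r * m ^ (r - 1) * (b - a) ^ 2 := by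
  have hb : 0 ≤ b := ha.trans hab
  have h1 := young hr hb ha
  have h2 : b ^ (r - 1) ≤ m ^ (r - 1) := Real.rpow_le_rpow hb hbm (by linarith)
  have h3 := rpow_split hr hb
  have h4 : b ^ r - a ^ r ≤ r * m ^ (r - 1) * (b - a) := by
    have : r * (b - a) * b ^ (r - 1) ≤ r * (b - a) * m ^ (r - 1) :=
      mul_le_mul_of_nonneg_left h2 (mul_nonneg (by linarith) (by linarith))
    nlinarith
  calc _ ≤ r * m ^ (r - 1) * (b - a) * (b - a) :=
        mul_le_mul_of_nonneg_right h4 (by linarith)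
    _ = _ := by ring

/-- Lipschitz bound on `[-m, m]` for the odd power `x ↦ |x| ^ r * sgn x`, in monotone form. -/
lemma lip_signed {r m x y : ℝ} (hr : 1 < r) (hx : |x| ≤ m) (hy : |y| ≤ m) :
    (|y| ^ r * sgn y - |x| ^ r * sgn x) * (y - x) ≤ r * m ^ (r - 1) * (y - x) ^ 2 := by
  have same : (|y| ^ r - |x| ^ r) * (|y| - |x|) ≤ r * m ^ (r - 1) * (|y| - |x|) ^ 2 := by
    rcases le_total |x| |y| with h | h
    · exact lip_nonneg hr (abs_nonneg x) h hy
    · have := lip_nonneg hr (abs_nonneg y) h hx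
      linarith
  have opp : (|y| ^ r + |x| ^ r) * (|y| + |x|) ≤ r * m ^ (r - 1) * (|y| + |x|) ^ 2 := by
    have key : ∀ z : ℝ, |z| ≤ m → |z| ^ r ≤ m ^ (r - 1) * |z| := fun z hz => by
      rw [rpow_split hr (abs_nonneg z)]
      exact mul_le_mul_of_nonneg_right
        (Real.rpow_le_rpow (abs_nonneg z) hz (by linarith)) (abs_nonneg z)
    have hm : 0 ≤ m ^ (r - 1) := Real.rpow_nonneg ((abs_nonneg x).trans hx) _
    have hs : 0 ≤ |y| + |x| := by positivity
    calc _ ≤ (m ^ (r - 1) * |y| + m ^ (r - 1) * |x|) * (|y| + |x|) :=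
          mul_le_mul_of_nonneg_right (add_le_add (key y hy) (key x hx)) hs
      _ = 1 * (m ^ (r - 1) * (|y| + |x|) ^ 2) := by ring
      _ ≤ r * (m ^ (r - 1) * (|y| + |x|) ^ 2) :=
          mul_le_mul_of_nonneg_right hr.le (by positivity)
      _ = _ := by ring
  rcases sgn_cases x with ⟨sx, hx'⟩ | ⟨sx, hx'⟩ <;>
    rcases sgn_cases y with ⟨sy, hy'⟩ | ⟨sy, hy'⟩ <;>
    rw [sx, sy] <;> generalize |y| ^ r = B at * <;> generalize |x| ^ r = A at * <;>
    rw [hx', hy'] at same opp <;> linarith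

/-- The first-order expansion of `|x| ^ p` at `x`, with a quadratic bound on the remainder. -/
lemma power_step {p m x y : ℝ} (hp : 2 < p) (hx : |x| ≤ m) (hy : |y| ≤ m) :
    |y| ^ p ≤ |x| ^ p + p * (|x| ^ (p - 1) * sgn x * (y - x))
      + p * (p - 1) * m ^ (p - 2) * (y - x) ^ 2 := by
  have h1 := young (r := p) (by linarith) (abs_nonneg y) (abs_nonneg x)
  have h2 := lip_signed (r := p - 1) (by linarith) hx hy
  rw [show p - 1 - 1 = p - 2 by ring] at h2
  have h3 := rpow_split (r := p) (by linarith) (abs_nonneg y)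
  have hc : 0 ≤ |y| ^ (p - 1) := by positivity
  -- the tangent line of `|·| ^ p` at `y`, evaluated at `x`
  have h4 : |y| ^ p - |x| ^ p ≤ p * (|y| ^ (p - 1) * sgn y * (y - x)) := by
    have h5 : |y| - |x| ≤ sgn y * (y - x) := by linarith [sgn_subgradient y x]
    have := mul_le_mul_of_nonneg_left h5 (mul_nonneg (by linarith : (0:ℝ) ≤ p) hc)
    nlinarith
  nlinarith [mul_le_mul_of_nonneg_left h2 (by linarith : (0:ℝ) ≤ p)]

/-! ### Pathwise inequalities -/

/-- The running maximum `max_{0 ≤ j ≤ n} |x j|`. -/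
noncomputable def runMax (x : ℕ → ℝ) : ℕ → ℝ
  | 0 => |x 0|
  | k + 1 => max (runMax x k) |x (k + 1)|

lemma abs_le_runMax (x : ℕ → ℝ) (n : ℕ) : |x n| ≤ runMax x n := by
  cases n with
  | zero => exact le_rfl
  | succ k => exact le_max_right _ _

lemma runMax_mono (x : ℕ → ℝ) : Monotone (runMax x) :=
  monotone_nat_of_le_succ fun _ => le_max_left _ _

lemma runMax_nonneg (x : ℕ → ℝ) (n : ℕ) : 0 ≤ runMax x n :=
  (abs_nonneg _).trans (abs_le_runMax x n)

lemma iSup_le_runMax (x : ℕ → ℝ) (n : ℕ) : ⨆ j ∈ Finset.Icc 1 n, |x j| ≤ runMax x n := by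
  have h0 := runMax_nonneg x n
  refine Real.iSup_le (fun j => Real.iSup_le (fun hj => ?_) h0) h0
  exact (abs_le_runMax x j).trans (runMax_mono x (Finset.mem_Icc.1 hj).2)

/-- The crude bound `M ≤ n s`, for any `s` dominating the increments up to time `n`. -/
lemma runMax_le {x : ℕ → ℝ} (hx0 : x 0 = 0) {s : ℝ} {n : ℕ} (hs : 0 ≤ s)
    (hd : ∀ k < n, |x (k + 1) - x k| ≤ s) : runMax x n ≤ n * s := by
  have h1 : ∀ k ≤ n, |x k| ≤ k * s := by
    intro k
    induction k with
    | zero => simp [hx0]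
    | succ k ih =>
      intro hk
      have h2 := ih (by omega)
      have h3 := hd k (by omega)
      have h4 : |x (k + 1)| ≤ |x k| + |x (k + 1) - x k| := by
        simpa using abs_add_le (x k) (x (k + 1) - x k)
      push_cast
      linarith
  have h2 : ∀ k ≤ n, runMax x k ≤ n * s := by
    intro k
    induction k with
    | zero => intro _; simp only [runMax, hx0, abs_zero]; positivity
    | succ k ih =>
      intro hk
      refine max_le (ih (by omega)) ((h1 _ hk).trans ?_)
      have : ((k + 1 : ℕ) : ℝ) ≤ n := by exact_mod_cast hk
      exact mul_le_mul_of_nonneg_right this hs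
  exact h2 n le_rfl

/-- Doob's inequality before taking expectations, with `M ^ (p - 1) |x n|` on the right. -/
lemma doob_pathwise_aux {p : ℝ} (hp : 1 < p) (x : ℕ → ℝ) (n : ℕ) :
    (p - 1) * runMax x n ^ p ≤ p * (runMax x n ^ (p - 1) * |x n|)
      - p * ∑ k ∈ range n, runMax x k ^ (p - 1) * sgn (x k) * (x (k + 1) - x k) := by
  induction n with
  | zero =>
    simp only [runMax, range_zero, sum_empty, mul_zero, sub_zero]
    rw [← rpow_split hp (abs_nonneg _)]
    have : 0 ≤ |x 0| ^ p := by positivity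
    linarith
  | succ k ih =>
    rw [sum_range_succ]
    have hM := runMax_nonneg x k
    have hc : 0 ≤ runMax x k ^ (p - 1) := Real.rpow_nonneg hM _
    have h1 := mul_le_mul_of_nonneg_left (sgn_subgradient (x k) (x (k + 1)))
      (mul_nonneg (by linarith : (0:ℝ) ≤ p) hc)
    simp only [runMax]
    rcases le_total |x (k + 1)| (runMax x k) with h | h
    · rw [max_eq_left h]
      linarith
    · -- at a new maximum the increment of the potential is nonnegative by Young's inequality
      rw [max_eq_right h]
      have h2 := young hp hM (abs_nonneg (x (k + 1)))
      rw [← rpow_split hp (abs_nonneg (x (k + 1)))]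
      linarith

/-- Doob's `L^p` inequality, with its sharp constant, up to a martingale transform: Young's
inequality absorbs the factor `M ^ (p - 1)` of `doob_pathwise_aux` into the left-hand side. -/
lemma doob_pathwise {p : ℝ} (hp : 1 < p) (x : ℕ → ℝ) (n : ℕ) :
    runMax x n ^ p ≤ (p / (p - 1)) ^ p * |x n| ^ p - p * (p / (p - 1)) *
      ∑ k ∈ range n, runMax x k ^ (p - 1) * sgn (x k) * (x (k + 1) - x k) := by
  have h1 : 0 < p - 1 := by linarith
  have hc : 0 < p / (p - 1) := div_pos (by linarith) h1
  have h2 := mul_le_mul_of_nonneg_left (doob_pathwise_aux hp x n) hc.le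
  have h3 := young hp (runMax_nonneg x n) (mul_nonneg hc.le (abs_nonneg (x n)))
  rw [Real.mul_rpow hc.le (abs_nonneg _)] at h3
  have h4 : p / (p - 1) * ((p - 1) * runMax x n ^ p) = p * runMax x n ^ p := by
    field_simp
  linarith

/-- Summed first-order expansions of `|x| ^ p`, with the remainder controlled by the quadratic
variation. -/
lemma power_pathwise {p : ℝ} (hp : 2 < p) (x : ℕ → ℝ) (hx0 : x 0 = 0) {n : ℕ} {m : ℝ}
    (hm : ∀ k ≤ n, |x k| ≤ m) :
    |x n| ^ p ≤ p * (∑ k ∈ range n, |x k| ^ (p - 1) * sgn (x k) * (x (k + 1) - x k))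
      + p * (p - 1) * m ^ (p - 2) * ∑ k ∈ range n, (x (k + 1) - x k) ^ 2 := by
  induction n with
  | zero => simp [hx0, Real.zero_rpow (by linarith : p ≠ 0)]
  | succ k ih =>
    have h1 := ih fun j hj => hm j (by omega)
    have h2 := power_step hp (hm k (by omega)) (hm (k + 1) le_rfl)
    rw [sum_range_succ, sum_range_succ]
    linarith

/-- The predictable integrand of the martingale transform in `pathwise`: it depends on
`x 0, …, x k` only. -/
noncomputable def integrand (p : ℝ) (x : ℕ → ℝ) (k : ℕ) : ℝ :=
  p / 2 * ((p / (p - 1)) ^ p * p * |x k| ^ (p - 1) - p * (p / (p - 1)) * runMax x k ^ (p - 1))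
    * sgn (x k)

/-- The constant `L` for which `‖M‖_p ≤ L ‖S‖_p` is shown. -/
noncomputable def bdgConst (p : ℝ) : ℝ := p * (p / (p - 1)) ^ ((p - 1) / 2)

lemma bdgConst_pos {p : ℝ} (hp : 2 < p) : 0 < bdgConst p :=
  mul_pos (by linarith) (Real.rpow_pos_of_pos (div_pos (by linarith) (by linarith)) _)

lemma bdgConst_sq {p : ℝ} (hp : 2 < p) :
    bdgConst p ^ 2 = (p / (p - 1)) ^ p * (p * (p - 1)) := by
  have h1 : 0 < p - 1 := by linarith
  have hc : 0 < p / (p - 1) := div_pos (by linarith) h1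
  rw [bdgConst, mul_pow, ← Real.rpow_mul_natCast hc.le, rpow_split (by linarith : 1 < p) hc.le]
  have : (p - 1) / 2 * ((2 : ℕ) : ℝ) = p - 1 := by push_cast; ring
  rw [this]
  field_simp

/-- The bound `M ^ p ≤ L ^ p S ^ p` up to a martingale transform, for a deterministic path. -/
lemma pathwise {p : ℝ} (hp : 2 < p) (x : ℕ → ℝ) (hx0 : x 0 = 0) (n : ℕ) :
    runMax x n ^ p ≤ bdgConst p ^ p * (∑ k ∈ range n, (x (k + 1) - x k) ^ 2) ^ (p / 2)
      + ∑ k ∈ range n, integrand p x k * (x (k + 1) - x k) := by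
  have hL := bdgConst_pos hp
  have hL2 := bdgConst_sq hp
  have hcp : 0 ≤ (p / (p - 1)) ^ p :=
    Real.rpow_nonneg (div_nonneg (by linarith) (by linarith)) _
  have hM := runMax_nonneg x n
  have hD := doob_pathwise (by linarith : 1 < p) x n
  have hP := mul_le_mul_of_nonneg_left (power_pathwise hp x hx0 (n := n) (m := runMax x n)
    fun k hk => (abs_le_runMax x k).trans (runMax_mono x hk)) hcp
  have hsum : ∑ k ∈ range n, integrand p x k * (x (k + 1) - x k) =
      p / 2 * ((p / (p - 1)) ^ p * p *
          (∑ k ∈ range n, |x k| ^ (p - 1) * sgn (x k) * (x (k + 1) - x k))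
        - p * (p / (p - 1)) *
          ∑ k ∈ range n, runMax x k ^ (p - 1) * sgn (x k) * (x (k + 1) - x k)) := by
    rw [mul_sum, mul_sum, ← sum_sub_distrib, mul_sum]
    refine sum_congr rfl fun k _ => ?_
    unfold integrand
    ring
  have hQ : 0 ≤ ∑ k ∈ range n, (x (k + 1) - x k) ^ 2 := sum_nonneg fun _ _ => sq_nonneg _
  rw [hsum]
  generalize (∑ k ∈ range n, (x (k + 1) - x k) ^ 2) = Q at *
  -- exponent `p / 2` with entries `M ^ 2` and `L ^ 2 * Q` absorbs the factor `M ^ (p - 2)`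
  have hY := young (r := p / 2) (by linarith) (sq_nonneg (runMax x n))
    (mul_nonneg (sq_nonneg (bdgConst p)) hQ)
  rw [Real.mul_rpow (sq_nonneg _) hQ] at hY
  have e1 : ∀ z : ℝ, 0 ≤ z → (z ^ 2) ^ (p / 2) = z ^ p := fun z hz => by
    rw [← Real.rpow_natCast_mul hz]; congr 1; push_cast; ring
  have e2 : (runMax x n ^ 2) ^ (p / 2 - 1) = runMax x n ^ (p - 2) := by
    rw [← Real.rpow_natCast_mul hM]; congr 1; push_cast; ring
  rw [e1 _ hM, e1 _ hL.le, e2, hL2] at hY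
  have h5 := mul_le_mul_of_nonneg_left (hD.trans (sub_le_sub_right hP _))
    (by linarith : 0 ≤ p / 2)
  linarith

/-- The terms of the transform are dominated by a multiple of `S ^ p`, since `M ≤ n S`; this is
what makes them integrable. -/
lemma abs_integrand_mul_le {p : ℝ} (hp : 2 < p) (x : ℕ → ℝ) (hx0 : x 0 = 0) {n k : ℕ}
    (hk : k < n) {s : ℝ} (hs : 0 ≤ s) (hd : ∀ k < n, |x (k + 1) - x k| ≤ s) :
    |integrand p x k * (x (k + 1) - x k)| ≤
      p / 2 * ((p / (p - 1)) ^ p * p + p * (p / (p - 1))) * (n : ℝ) ^ (p - 1) * s ^ p := by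
  have hc : 0 < p / (p - 1) := div_pos (by linarith) (by linarith)
  have hcp : 0 ≤ (p / (p - 1)) ^ p := Real.rpow_nonneg hc.le _
  have hM : runMax x k ≤ n * s := (runMax_mono x hk.le).trans (runMax_le hx0 hs hd)
  have h1 : runMax x k ^ (p - 1) ≤ (n * s) ^ (p - 1) :=
    Real.rpow_le_rpow (runMax_nonneg x k) hM (by linarith)
  have h2 : |x k| ^ (p - 1) ≤ (n * s) ^ (p - 1) :=
    Real.rpow_le_rpow (abs_nonneg _) ((abs_le_runMax x k).trans hM) (by linarith)
  have h3 : 0 ≤ runMax x k ^ (p - 1) := Real.rpow_nonneg (runMax_nonneg x k) _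
  have h4 : 0 ≤ |x k| ^ (p - 1) := by positivity
  have hp2 : 0 ≤ p / 2 := by linarith
  have hA : 0 ≤ (p / (p - 1)) ^ p * p := mul_nonneg hcp (by linarith)
  have hB : 0 ≤ p * (p / (p - 1)) := mul_nonneg (by linarith) hc.le
  have h5 : |(p / (p - 1)) ^ p * p * |x k| ^ (p - 1)
      - p * (p / (p - 1)) * runMax x k ^ (p - 1)| ≤
      ((p / (p - 1)) ^ p * p + p * (p / (p - 1))) * (n * s) ^ (p - 1) := by
    have a1 := mul_le_mul_of_nonneg_left h1 hB
    have a2 := mul_le_mul_of_nonneg_left h2 hA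
    have a3 := mul_nonneg hA h4
    have a4 := mul_nonneg hB h3
    rw [abs_le]
    constructor <;> linarith
  rw [integrand, abs_mul, abs_mul, abs_mul, abs_sgn, mul_one, abs_of_nonneg hp2]
  calc _ ≤ p / 2 * (((p / (p - 1)) ^ p * p + p * (p / (p - 1))) * (n * s) ^ (p - 1)) * s :=
        mul_le_mul (mul_le_mul_of_nonneg_left h5 hp2) (hd k hk) (abs_nonneg _) (by positivity)
    _ = _ := by
        rw [Real.mul_rpow (Nat.cast_nonneg n) hs, rpow_split (by linarith : 1 < p) hs]
        ring

/-! ### Taking expectations -/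

lemma measurable_runMax {Ω : Type*} {m : MeasurableSpace Ω} {X : ℕ → Ω → ℝ} {n : ℕ}
    (h : ∀ k ≤ n, Measurable[m] (X k)) :
    Measurable[m] fun ω => runMax (fun k => X k ω) n := by
  induction n with
  | zero => exact (h 0 le_rfl).abs
  | succ k ih => exact (ih fun j hj => h j (by omega)).max (h (k + 1) le_rfl).abs

lemma measurable_integrand {Ω : Type*} {m : MeasurableSpace Ω} {X : ℕ → Ω → ℝ} {n : ℕ} (p : ℝ)
    (h : ∀ k ≤ n, Measurable[m] (X k)) :
    Measurable[m] fun ω => integrand p (fun k => X k ω) n :=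
  (((((h n le_rfl).abs.pow_const _).const_mul _).sub
    (((measurable_runMax h).pow_const _).const_mul _)).const_mul _).mul
    (measurable_sgn.comp (h n le_rfl))

/-- Martingale increments are orthogonal to the past. -/
lemma integral_mul_increment {Ω : Type*} {m0 : MeasurableSpace Ω} {μ : Measure Ω}
    [IsProbabilityMeasure μ] {ℱ : Filtration ℕ m0} {X : ℕ → Ω → ℝ} (hX : Martingale X ℱ μ)
    (k : ℕ) {H : Ω → ℝ} (hH : StronglyMeasurable[ℱ k] H)
    (hint : Integrable (fun ω => H ω * (X (k + 1) ω - X k ω)) μ) :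
    ∫ ω, H ω * (X (k + 1) ω - X k ω) ∂μ = 0 := by
  have hd : Integrable (X (k + 1) - X k) μ := (hX.integrable _).sub (hX.integrable _)
  have h1 : μ[H * (X (k + 1) - X k) | ℱ k] =ᵐ[μ] H * μ[X (k + 1) - X k | ℱ k] :=
    condExp_mul_of_stronglyMeasurable_left hH hint hd
  have h2 : μ[X (k + 1) - X k | ℱ k] =ᵐ[μ] 0 := by
    filter_upwards [condExp_sub (hX.integrable (k + 1)) (hX.integrable k) (ℱ k),
      hX.condExp_ae_eq k.le_succ, hX.condExp_ae_eq (le_refl k)] with ω a b c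
    simp [a, b, c]
  calc ∫ ω, H ω * (X (k + 1) ω - X k ω) ∂μ
      = ∫ ω, (μ[H * (X (k + 1) - X k) | ℱ k]) ω ∂μ := (integral_condExp (ℱ.le k)).symm
    _ = ∫ _, (0 : ℝ) ∂μ := by
        refine integral_congr_ae ?_
        filter_upwards [h1, h2] with ω a b
        simp [a, b]
    _ = 0 := by simp

lemma sum_Icc_eq_range (x : ℕ → ℝ) (n : ℕ) :
    ∑ j ∈ Finset.Icc 1 n, (x j - x (j - 1)) ^ 2 = ∑ k ∈ range n, (x (k + 1) - x k) ^ 2 := by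
  induction n with
  | zero => simp
  | succ k ih => rw [sum_Icc_succ_top (by omega), ih, sum_range_succ]; simp

/-- The inequality `E[M ^ p] ≤ L ^ p E[S ^ p]` when the right-hand side is finite. -/
lemma lintegral_runMax_le {p : ℝ} (hp : 2 < p) {Ω : Type*} {m0 : MeasurableSpace Ω}
    {μ : Measure Ω} [IsProbabilityMeasure μ] {ℱ : Filtration ℕ m0} {X : ℕ → Ω → ℝ}
    (hX : Martingale X ℱ μ) (hX0 : X 0 = 0) (n : ℕ)
    (hfin : ∫⁻ ω, ENNReal.ofReal
      ((∑ k ∈ range n, (X (k + 1) ω - X k ω) ^ 2) ^ (p / 2)) ∂μ ≠ ⊤) :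
    ∫⁻ ω, ENNReal.ofReal (runMax (fun k => X k ω) n ^ p) ∂μ ≤
      ENNReal.ofReal (bdgConst p ^ p) * ∫⁻ ω, ENNReal.ofReal
        ((∑ k ∈ range n, (X (k + 1) ω - X k ω) ^ 2) ^ (p / 2)) ∂μ := by
  have hmeas : ∀ j k, j ≤ k → Measurable[ℱ k] (X j) := fun j k hjk =>
    ((hX.stronglyAdapted j).mono (ℱ.mono hjk)).measurable
  have hmeas0 : ∀ j, Measurable (X j) := fun j => (hmeas j j le_rfl).mono (ℱ.le j) le_rfl
  set Q : Ω → ℝ := fun ω => ∑ k ∈ range n, (X (k + 1) ω - X k ω) ^ 2 with hQdef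
  have hQ0 : ∀ ω, 0 ≤ Q ω := fun ω => sum_nonneg fun _ _ => sq_nonneg _
  have hQm : Measurable Q :=
    Finset.measurable_sum _ fun k _ => ((hmeas0 (k + 1)).sub (hmeas0 k)).pow_const 2
  have hQp0 : ∀ ω, 0 ≤ Q ω ^ (p / 2) := fun ω => Real.rpow_nonneg (hQ0 ω) _
  have hQint : Integrable (fun ω => Q ω ^ (p / 2)) μ :=
    (lintegral_ofReal_ne_top_iff_integrable (hQm.pow_const _).aestronglyMeasurable
      (ae_of_all _ hQp0)).1 hfin
  have hd : ∀ ω, ∀ k < n, |X (k + 1) ω - X k ω| ≤ √(Q ω) := fun ω k hk => by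
    refine Real.abs_le_sqrt ?_
    exact single_le_sum (f := fun k => (X (k + 1) ω - X k ω) ^ 2)
      (fun _ _ => sq_nonneg _) (mem_range.2 hk)
  have hsq : ∀ ω, √(Q ω) ^ p = Q ω ^ (p / 2) := fun ω => by
    rw [Real.sqrt_eq_rpow, ← Real.rpow_mul (hQ0 ω)]; congr 1; ring
  have hx0 : ∀ ω, X 0 ω = 0 := fun ω => by rw [hX0]; rfl
  have hMint : Integrable (fun ω => runMax (fun k => X k ω) n ^ p) μ := by
    refine (hQint.const_mul ((n : ℝ) ^ p)).mono'
      ((measurable_runMax fun k _ => hmeas0 k).pow_const _).aestronglyMeasurable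
      (ae_of_all _ fun ω => ?_)
    rw [Real.norm_of_nonneg (Real.rpow_nonneg (runMax_nonneg _ _) _), ← hsq,
      ← Real.mul_rpow (Nat.cast_nonneg n) (Real.sqrt_nonneg _)]
    exact Real.rpow_le_rpow (runMax_nonneg _ _)
      (runMax_le (hx0 ω) (Real.sqrt_nonneg _) (hd ω)) (by linarith)
  have hTint : ∀ k ∈ range n, Integrable
      (fun ω => integrand p (fun k => X k ω) k * (X (k + 1) ω - X k ω)) μ := by
    intro k hk
    refine (hQint.const_mul (p / 2 * ((p / (p - 1)) ^ p * p + p * (p / (p - 1)))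
      * (n : ℝ) ^ (p - 1))).mono' ((measurable_integrand p fun j _ => hmeas0 j).mul
      ((hmeas0 (k + 1)).sub (hmeas0 k))).aestronglyMeasurable (ae_of_all _ fun ω => ?_)
    rw [← hsq]
    exact abs_integrand_mul_le hp (fun k => X k ω) (hx0 ω) (mem_range.1 hk)
      (Real.sqrt_nonneg _) (hd ω)
  have hT0 : ∀ k ∈ range n,
      ∫ ω, integrand p (fun k => X k ω) k * (X (k + 1) ω - X k ω) ∂μ = 0 := fun k hk =>
    integral_mul_increment hX k
      (measurable_integrand p fun j hj => hmeas j k hj).stronglyMeasurable (hTint k hk)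
  have hmain : ∫ ω, runMax (fun k => X k ω) n ^ p ∂μ ≤
      bdgConst p ^ p * ∫ ω, Q ω ^ (p / 2) ∂μ := by
    calc _ ≤ ∫ ω, (bdgConst p ^ p * Q ω ^ (p / 2)
          + ∑ k ∈ range n, integrand p (fun k => X k ω) k * (X (k + 1) ω - X k ω)) ∂μ :=
          integral_mono hMint ((hQint.const_mul _).add (integrable_finsetSum _ hTint))
            fun ω => pathwise hp (fun k => X k ω) (hx0 ω) n
      _ = _ := by
          rw [integral_add (hQint.const_mul _) (integrable_finsetSum _ hTint),
            integral_finsetSum _ hTint, sum_eq_zero hT0, add_zero, integral_const_mul]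
  rw [← ofReal_integral_eq_lintegral_ofReal hMint
      (ae_of_all _ fun ω => Real.rpow_nonneg (runMax_nonneg _ _) _),
    ← ofReal_integral_eq_lintegral_ofReal hQint (ae_of_all _ hQp0),
    ← ENNReal.ofReal_mul (Real.rpow_nonneg (bdgConst_pos hp).le _)]
  exact ENNReal.ofReal_le_ofReal hmain

/-- For every `p ∈ (2,∞)`, every real-valued martingale `(X_n)` with `X_0 = 0`,
and every `n ≥ 1`, one has
`(1/(2p)) · ((p−1)/p)^{(p−1)/2} · (E[(X_n*)^p])^{1/p} ≤ (E[S_n(X)^p])^{1/p}`. -/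
theorem maximal_function_lower_bound (p : ℝ) (hp : 2 < p)
    {Ω : Type*} {m0 : MeasurableSpace Ω} {μ : Measure Ω} [IsProbabilityMeasure μ]
    (ℱ : Filtration ℕ m0) (X : ℕ → Ω → ℝ) (hX : Martingale X ℱ μ) (hX0 : X 0 = 0)
    (n : ℕ) (hn : 1 ≤ n) :
    ENNReal.ofReal ((1 / (2 * p)) * ((p - 1) / p) ^ ((p - 1) / 2)) *
        (∫⁻ ω, ENNReal.ofReal ((⨆ j ∈ Finset.Icc 1 n, |X j ω|) ^ p) ∂μ) ^ (1 / p) ≤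
      (∫⁻ ω, ENNReal.ofReal
          ((∑ j ∈ Finset.Icc 1 n, (X j ω - X (j - 1) ω) ^ 2) ^ (p / 2)) ∂μ) ^ (1 / p) := by
  have hp0 : 0 < p := by linarith
  simp only [fun ω => sum_Icc_eq_range (fun j => X j ω) n]
  set I := ∫⁻ ω, ENNReal.ofReal
    ((∑ k ∈ range n, (X (k + 1) ω - X k ω) ^ 2) ^ (p / 2)) ∂μ with hI
  by_cases hfin : I = ⊤
  · rw [hfin, ENNReal.top_rpow_of_pos (by positivity)]
    exact le_top
  have hL := bdgConst_pos hp
  have h1 : ∫⁻ ω, ENNReal.ofReal ((⨆ j ∈ Finset.Icc 1 n, |X j ω|) ^ p) ∂μ ≤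
      ENNReal.ofReal (bdgConst p ^ p) * I := by
    refine (lintegral_mono fun ω => ENNReal.ofReal_le_ofReal ?_).trans
      (lintegral_runMax_le hp hX hX0 n hfin)
    exact Real.rpow_le_rpow (Real.iSup_nonneg fun j => Real.iSup_nonneg fun _ => abs_nonneg _)
      (iSup_le_runMax (fun j => X j ω) n) hp0.le
  have h2 : (ENNReal.ofReal (bdgConst p ^ p) * I) ^ (1 / p) =
      ENNReal.ofReal (bdgConst p) * I ^ (1 / p) := by
    rw [ENNReal.mul_rpow_of_nonneg _ _ (by positivity), ← ENNReal.ofReal_rpow_of_pos hL,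
      ← ENNReal.rpow_mul, mul_one_div_cancel hp0.ne', ENNReal.rpow_one]
  have h3 : (1 / (2 * p)) * ((p - 1) / p) ^ ((p - 1) / 2) * bdgConst p ≤ 1 := by
    have hc : 0 < p / (p - 1) := div_pos hp0 (by linarith)
    have hce : 0 < (p / (p - 1)) ^ ((p - 1) / 2) := Real.rpow_pos_of_pos hc _
    rw [bdgConst, ← inv_div p (p - 1), Real.inv_rpow hc.le]
    field_simp
    norm_num
  calc _ ≤ ENNReal.ofReal ((1 / (2 * p)) * ((p - 1) / p) ^ ((p - 1) / 2)) *
        (ENNReal.ofReal (bdgConst p) * I ^ (1 / p)) := by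
        rw [← h2]
        gcongr
    _ = ENNReal.ofReal ((1 / (2 * p)) * ((p - 1) / p) ^ ((p - 1) / 2) * bdgConst p) *
        I ^ (1 / p) := by
        rw [← mul_assoc, ENNReal.ofReal_mul' hL.le]
    _ ≤ 1 * I ^ (1 / p) := by
        gcongr
        exact ENNReal.ofReal_le_one.2 h3
    _ = _ := one_mul _
end
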